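/- Let p, q ∈ [0,1] and let ρ be any 4×4 complex matrix with trace 1. Conditioning the quantum-switch output on the control-qubit outcome |+⟩ gives (I₄ ⊗ ⟨+|) · S(ρ) · (I₄ ⊗ |+⟩) = (1−p)(1−q)·ρ + p(1−q)·(I₂⊗X) ρ (I₂⊗X)† + (1−p)q·(I₂⊗Z) ρ (I₂⊗Z)†, a matrix of trace 1−pq; consequently, if pq < 1, the normalized conditional state is [ (1−p)(1−q)·ρ + p(1−q)·(I₂⊗X) ρ (I₂⊗X)† + (1−p)q·(I₂⊗Z) ρ (I₂⊗Z)† ] / (1−pq). -/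

import Mathlib

open Matrix Kronecker Complex

noncomputable section

def PX : Matrix (Fin 2) (Fin 2) ℂ := !![0, 1; 1, 0]
def PZ : Matrix (Fin 2) (Fin 2) ℂ := !![1, 0; 0, -1]
def I2 : Matrix (Fin 2) (Fin 2) ℂ := 1

def ket0 : Fin 2 → ℂ := ![1, 0]
def ket1 : Fin 2 → ℂ := ![0, 1]
def ketPlus : Fin 2 → ℂ := ((Real.sqrt 2 : ℂ))⁻¹ • (ket0 + ket1)
def ketMinus : Fin 2 → ℂ := ((Real.sqrt 2 : ℂ))⁻¹ • (ket0 - ket1)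

def proj (v : Fin 2 → ℂ) : Matrix (Fin 2) (Fin 2) ℂ := vecMulVec v (star v)

/-- Kronecker product, flattened to `Fin (m*n)` indices (row-major). -/
def kron {m n : ℕ} (A : Matrix (Fin m) (Fin m) ℂ) (B : Matrix (Fin n) (Fin n) ℂ) :
    Matrix (Fin (m * n)) (Fin (m * n)) ℂ :=
  Matrix.reindex finProdFinEquiv finProdFinEquiv (A ⊗ₖ B)

/-- Bit-flip channel Kraus operators: D₁ = √(1-p)·I₂, D₂ = √p·X. -/
def Dk (p : ℝ) : Fin 2 → Matrix (Fin 2) (Fin 2) ℂ :=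
  ![(Real.sqrt (1 - p) : ℂ) • I2, (Real.sqrt p : ℂ) • PX]

/-- Phase-flip channel Kraus operators: E₁ = √(1-q)·I₂, E₂ = √q·Z. -/
def Ek (q : ℝ) : Fin 2 → Matrix (Fin 2) (Fin 2) ℂ :=
  ![(Real.sqrt (1 - q) : ℂ) • I2, (Real.sqrt q : ℂ) • PZ]

/-- Quantum-switch Kraus operators W_{ij} = I₂ ⊗ (DᵢEⱼ ⊗ |0⟩⟨0| + EⱼDᵢ ⊗ |1⟩⟨1|). -/
def W (p q : ℝ) (i j : Fin 2) : Matrix (Fin 8) (Fin 8) ℂ :=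
  kron I2 (kron (Dk p i * Ek q j) (proj ket0) + kron (Ek q j * Dk p i) (proj ket1))

/-- Quantum-switch output S(ρ) = Σᵢⱼ W_{ij} (ρ ⊗ |+⟩⟨+|) W_{ij}†. -/
def Sout (p q : ℝ) (ρ : Matrix (Fin 4) (Fin 4) ℂ) : Matrix (Fin 8) (Fin 8) ℂ :=
  ∑ i : Fin 2, ∑ j : Fin 2, W p q i j * kron ρ (proj ketPlus) * (W p q i j)ᴴ

/-- Contraction of the control-qubit factor of an 8×8 matrix with a vector v:
(I₄ ⊗ ⟨v|) M (I₄ ⊗ |v⟩). -/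
def contractCtrl (M : Matrix (Fin 8) (Fin 8) ℂ) (v : Fin 2 → ℂ) :
    Matrix (Fin 4) (Fin 4) ℂ :=
  Matrix.of fun a b => ∑ i : Fin 2, ∑ j : Fin 2,
    star (v i) * M (finProdFinEquiv (a, i)) (finProdFinEquiv (b, j)) * v j

/-!
Writing `J` for `I ⊗ |+⟩`, the input is `ρ ⊗ |+⟩⟨+| = J ρ J†`, so conditioning the control on `|+⟩`
turns each Kraus operator `W` of the switch into `J† W J`. For `W` built from `D` and `E` this is
`I ⊗ ½ (D E + E D)`, because `|0⟩` and `|1⟩` each have weight `½` in `|+⟩`. The identity commutes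
with everything, while `X` and `Z` anticommute: the `X Z` term cancels, and the branch loses exactly
its probability `p q`.
-/

section Kron

variable {l m n : ℕ}

theorem kron_finProdFinEquiv (A : Matrix (Fin m) (Fin m) ℂ) (B : Matrix (Fin n) (Fin n) ℂ)
    (a b : Fin m) (i j : Fin n) :
    kron A B (finProdFinEquiv (a, i)) (finProdFinEquiv (b, j)) = A a b * B i j := by
  simp only [kron, reindex_apply, submatrix_apply, Equiv.symm_apply_apply, kroneckerMap_apply]

theorem kron_one_one :
    kron (1 : Matrix (Fin m) (Fin m) ℂ) (1 : Matrix (Fin n) (Fin n) ℂ) = 1 := by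
  simp [kron]

theorem kron_zero_right (A : Matrix (Fin m) (Fin m) ℂ) :
    kron A (0 : Matrix (Fin n) (Fin n) ℂ) = 0 := by
  simp [kron]

theorem kron_add_right (A : Matrix (Fin m) (Fin m) ℂ) (B C : Matrix (Fin n) (Fin n) ℂ) :
    kron A (B + C) = kron A B + kron A C := by
  simp [kron, kronecker_add, submatrix_add]

theorem kron_smul_right {R : Type*} [Monoid R] [MulAction R ℂ] [SMulCommClass R ℂ ℂ] (r : R)
    (A : Matrix (Fin m) (Fin m) ℂ) (B : Matrix (Fin n) (Fin n) ℂ) :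
    kron A (r • B) = r • kron A B := by
  simp [kron, kronecker_smul, submatrix_smul]

theorem kron_mul_kron (A C : Matrix (Fin m) (Fin m) ℂ) (B D : Matrix (Fin n) (Fin n) ℂ) :
    kron A B * kron C D = kron (A * C) (B * D) := by
  simp [kron, mul_kronecker_mul]

theorem conjTranspose_kron (A : Matrix (Fin m) (Fin m) ℂ) (B : Matrix (Fin n) (Fin n) ℂ) :
    (kron A B)ᴴ = kron Aᴴ Bᴴ := by
  simp [kron, conjTranspose_kronecker]

theorem kron_mem_unitaryGroup {A : Matrix (Fin m) (Fin m) ℂ} {B : Matrix (Fin n) (Fin n) ℂ}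
    (hA : A ∈ unitaryGroup (Fin m) ℂ) (hB : B ∈ unitaryGroup (Fin n) ℂ) :
    kron A B ∈ unitaryGroup (Fin (m * n)) ℂ := by
  rw [mem_unitaryGroup_iff', star_eq_conjTranspose] at *
  rw [conjTranspose_kron, kron_mul_kron, hA, hB, kron_one_one]

theorem kron_kron (A : Matrix (Fin l) (Fin l) ℂ) (B : Matrix (Fin m) (Fin m) ℂ)
    (C : Matrix (Fin n) (Fin n) ℂ) :
    kron A (kron B C) =
      reindex (finCongr (mul_assoc l m n)) (finCongr (mul_assoc l m n)) (kron (kron A B) C) := by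
  have index_assoc (a : Fin l) (b : Fin m) (c : Fin n) :
      (finCongr (mul_assoc l m n)).symm (finProdFinEquiv (a, finProdFinEquiv (b, c))) =
        finProdFinEquiv (finProdFinEquiv (a, b), c) := by
    ext
    simp only [finProdFinEquiv_apply_val, finCongr_symm, finCongr_apply, Fin.val_cast]
    ring
  ext x y
  obtain ⟨⟨a, bc⟩, rfl⟩ := finProdFinEquiv.surjective x
  obtain ⟨⟨b, c⟩, rfl⟩ := finProdFinEquiv.surjective bc
  obtain ⟨⟨a', bc'⟩, rfl⟩ := finProdFinEquiv.surjective y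
  obtain ⟨⟨b', c'⟩, rfl⟩ := finProdFinEquiv.surjective bc'
  simp only [reindex_apply, submatrix_apply, index_assoc, kron_finProdFinEquiv, mul_assoc]

end Kron

section TensorKet

variable {m n : ℕ}

/-- The operator `I ⊗ |v⟩`, which appends the state `v` of an `n`-dimensional second factor; its
adjoint is `I ⊗ ⟨v|`. Rows carry the row-major indexing of `kron`. -/
def tensorKet (m : ℕ) (v : Fin n → ℂ) : Matrix (Fin (m * n)) (Fin m) ℂ :=
  reindex finProdFinEquiv (Equiv.prodUnique (Fin m) Unit)
    ((1 : Matrix (Fin m) (Fin m) ℂ) ⊗ₖ replicateCol Unit v)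

theorem tensorKet_finProdFinEquiv (v : Fin n → ℂ) (a b : Fin m) (i : Fin n) :
    tensorKet m v (finProdFinEquiv (a, i)) b = if a = b then v i else 0 := by
  simp only [tensorKet, reindex_apply, submatrix_apply, Equiv.symm_apply_apply,
    kroneckerMap_apply, one_apply, replicateCol_apply, Equiv.prodUnique_symm_apply, ite_mul,
    one_mul, zero_mul]

theorem conjTranspose_tensorKet_mul_mul_tensorKet_apply (v w : Fin n → ℂ)
    (M : Matrix (Fin (m * n)) (Fin (m * n)) ℂ) (a b : Fin m) :
    ((tensorKet m v)ᴴ * M * tensorKet m w) a b =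
      ∑ i, ∑ j, star (v i) * M (finProdFinEquiv (a, i)) (finProdFinEquiv (b, j)) * w j := by
  rw [Finset.sum_comm]
  simp [mul_apply, ← finProdFinEquiv.sum_comp, Fintype.sum_prod_type, tensorKet_finProdFinEquiv,
    apply_ite, Finset.sum_mul]

theorem conjTranspose_tensorKet_mul_tensorKet (v w : Fin n → ℂ) :
    (tensorKet m v)ᴴ * tensorKet m w = (star v ⬝ᵥ w) • 1 := by
  ext a b
  simp [tensorKet, conjTranspose_kronecker, ← mul_kronecker_mul, conjTranspose_replicateCol,
    one_apply]

theorem kron_mul_tensorKet (A : Matrix (Fin m) (Fin m) ℂ) (B : Matrix (Fin n) (Fin n) ℂ)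
    (v : Fin n → ℂ) : kron A B * tensorKet m v = tensorKet m (B *ᵥ v) * A := by
  ext x b
  obtain ⟨⟨a, i⟩, rfl⟩ := finProdFinEquiv.surjective x
  simp only [mul_apply, ← finProdFinEquiv.sum_comp, Fintype.sum_prod_type, kron_finProdFinEquiv,
    tensorKet_finProdFinEquiv, mulVec, dotProduct, mul_ite, ite_mul, mul_zero, zero_mul,
    Finset.sum_ite_irrel, Finset.sum_const_zero, Finset.sum_ite_eq, Finset.sum_ite_eq',
    Finset.mem_univ, if_true, Finset.sum_mul]
  exact Finset.sum_congr rfl fun _ _ => by ring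

theorem kron_vecMulVec_star (ρ : Matrix (Fin m) (Fin m) ℂ) (v w : Fin n → ℂ) :
    kron ρ (vecMulVec v (star w)) = tensorKet m v * ρ * (tensorKet m w)ᴴ := by
  ext x y
  obtain ⟨⟨a, i⟩, rfl⟩ := finProdFinEquiv.surjective x
  obtain ⟨⟨b, j⟩, rfl⟩ := finProdFinEquiv.surjective y
  simp only [mul_apply, kron_finProdFinEquiv, vecMulVec_apply, tensorKet_finProdFinEquiv,
    conjTranspose_apply, Pi.star_apply, apply_ite star, star_zero, ite_mul, mul_ite, zero_mul,
    mul_zero, Finset.sum_ite_eq, Finset.mem_univ, if_true]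
  ring

theorem conjTranspose_tensorKet_mul_kron_mul_tensorKet (A : Matrix (Fin m) (Fin m) ℂ)
    (B : Matrix (Fin n) (Fin n) ℂ) (v w : Fin n → ℂ) :
    (tensorKet m v)ᴴ * kron A B * tensorKet m w = (star v ⬝ᵥ B *ᵥ w) • A := by
  rw [Matrix.mul_assoc, kron_mul_tensorKet, ← Matrix.mul_assoc,
    conjTranspose_tensorKet_mul_tensorKet, smul_mul, Matrix.one_mul]

theorem contractCtrl_eq_mul (M : Matrix (Fin 8) (Fin 8) ℂ) (v : Fin 2 → ℂ) :
    contractCtrl M v = (tensorKet 4 v)ᴴ * M * tensorKet 4 v := by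
  ext a b
  exact (conjTranspose_tensorKet_mul_mul_tensorKet_apply (m := 4) v v M a b).symm

theorem contractCtrl_mul_kron_proj_mul_conjTranspose (M : Matrix (Fin 8) (Fin 8) ℂ)
    (ρ : Matrix (Fin 4) (Fin 4) ℂ) (v w : Fin 2 → ℂ) :
    contractCtrl (M * kron ρ (proj w) * Mᴴ) v =
      ((tensorKet 4 v)ᴴ * M * tensorKet 4 w) * ρ * ((tensorKet 4 v)ᴴ * M * tensorKet 4 w)ᴴ := by
  rw [contractCtrl_eq_mul, proj, kron_vecMulVec_star]
  simp only [conjTranspose_mul, conjTranspose_conjTranspose, Matrix.mul_assoc]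

end TensorKet

section Conjugation

variable {n : Type*} [Fintype n]

theorem trace_mul_mul_conjTranspose_of_mem_unitaryGroup [DecidableEq n] {U : Matrix n n ℂ}
    (hU : U ∈ unitaryGroup n ℂ) (M : Matrix n n ℂ) : (U * M * Uᴴ).trace = M.trace := by
  rw [trace_mul_cycle, ← star_eq_conjTranspose, mem_unitaryGroup_iff'.mp hU, Matrix.one_mul]

theorem smul_mul_mul_conjTranspose_smul (r : ℝ) (U M : Matrix n n ℂ) :
    (r • U) * M * (r • U)ᴴ = r ^ 2 • (U * M * Uᴴ) := by
  simp only [conjTranspose_smul, star_trivial, Matrix.smul_mul, Matrix.mul_smul, smul_smul, sq]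

end Conjugation

section JordanProduct

variable {R : Type*} [Ring R] [Algebra ℝ R]

/-- The Jordan product `½ (ab + ba)`. When `a` and `b` are Kraus operators of the two channels, it
is the Kraus operator of their quantum switch with the control qubit prepared and found in `|+⟩`. -/
def jordanProduct (a b : R) : R :=
  (1 / 2 : ℝ) • (a * b + b * a)

theorem jordanProduct_smul_smul (r s : ℝ) (a b : R) :
    jordanProduct (r • a) (s • b) = (r * s) • jordanProduct a b := by
  simp only [jordanProduct, smul_mul_smul_comm, mul_comm s r, ← smul_add]
  rw [smul_comm]

theorem jordanProduct_of_commute {a b : R} (h : Commute a b) : jordanProduct a b = a * b := by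
  rw [jordanProduct, ← h.eq, ← two_smul ℝ, smul_smul, one_div, inv_mul_cancel₀ two_ne_zero,
    one_smul]

theorem jordanProduct_of_anticommute {a b : R} (h : a * b = -(b * a)) : jordanProduct a b = 0 := by
  rw [jordanProduct, h, neg_add_cancel, smul_zero]

theorem jordanProduct_one_left (a : R) : jordanProduct 1 a = a := by
  rw [jordanProduct_of_commute (Commute.one_left a), one_mul]

theorem jordanProduct_one_right (a : R) : jordanProduct a 1 = a := by
  rw [jordanProduct_of_commute (Commute.one_right a), mul_one]

end JordanProduct

section Switch

theorem trace_kron_mul_mul_conjTranspose_kron {m n : ℕ} {A : Matrix (Fin m) (Fin m) ℂ}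
    {B : Matrix (Fin n) (Fin n) ℂ} (hA : A ∈ unitaryGroup (Fin m) ℂ)
    (hB : B ∈ unitaryGroup (Fin n) ℂ) (ρ : Matrix (Fin (m * n)) (Fin (m * n)) ℂ) :
    (kron A B * ρ * (kron A B)ᴴ).trace = ρ.trace :=
  trace_mul_mul_conjTranspose_of_mem_unitaryGroup (kron_mem_unitaryGroup hA hB) ρ

theorem kron_jordanProduct_sqrt_smul_conj {m n : ℕ} {r s : ℝ} (hr : 0 ≤ r) (hs : 0 ≤ s)
    (A : Matrix (Fin m) (Fin m) ℂ) (B C : Matrix (Fin n) (Fin n) ℂ)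
    (ρ : Matrix (Fin (m * n)) (Fin (m * n)) ℂ) :
    kron A (jordanProduct (√r • B) (√s • C)) * ρ * (kron A (jordanProduct (√r • B) (√s • C)))ᴴ =
      (r * s) • (kron A (jordanProduct B C) * ρ * (kron A (jordanProduct B C))ᴴ) := by
  rw [jordanProduct_smul_smul, kron_smul_right, smul_mul_mul_conjTranspose_smul, mul_pow,
    Real.sq_sqrt hr, Real.sq_sqrt hs]

theorem PX_mem_unitaryGroup : PX ∈ unitaryGroup (Fin 2) ℂ := by
  rw [mem_unitaryGroup_iff', star_eq_conjTranspose]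
  ext i j
  fin_cases i <;> fin_cases j <;> simp [PX, mul_apply]

theorem PZ_mem_unitaryGroup : PZ ∈ unitaryGroup (Fin 2) ℂ := by
  rw [mem_unitaryGroup_iff', star_eq_conjTranspose]
  ext i j
  fin_cases i <;> fin_cases j <;> simp [PZ, mul_apply]

theorem PX_mul_PZ : PX * PZ = -(PZ * PX) := by
  simp [PX, PZ]

theorem Dk_zero (p : ℝ) : Dk p 0 = √(1 - p) • (1 : Matrix (Fin 2) (Fin 2) ℂ) :=
  Complex.coe_smul _ _

theorem Dk_one (p : ℝ) : Dk p 1 = √p • PX :=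
  Complex.coe_smul _ _

theorem Ek_zero (q : ℝ) : Ek q 0 = √(1 - q) • (1 : Matrix (Fin 2) (Fin 2) ℂ) :=
  Complex.coe_smul _ _

theorem Ek_one (q : ℝ) : Ek q 1 = √q • PZ :=
  Complex.coe_smul _ _

theorem star_dotProduct_proj_mulVec (u v : Fin 2 → ℂ) :
    star v ⬝ᵥ proj u *ᵥ v = (‖star u ⬝ᵥ v‖ ^ 2 : ℝ) := by
  rw [proj, vecMulVec_mulVec, dotProduct_smul, op_smul_eq_mul, star_dotProduct v u,
    ← starRingEnd_apply, Complex.conj_mul', Complex.ofReal_pow]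

theorem star_ketPlus_dotProduct_proj_ket0_mulVec_ketPlus :
    star ketPlus ⬝ᵥ proj ket0 *ᵥ ketPlus = (1 / 2 : ℝ) := by
  rw [star_dotProduct_proj_mulVec]
  simp [dotProduct, ketPlus, ket0, ket1]

theorem star_ketPlus_dotProduct_proj_ket1_mulVec_ketPlus :
    star ketPlus ⬝ᵥ proj ket1 *ᵥ ketPlus = (1 / 2 : ℝ) := by
  rw [star_dotProduct_proj_mulVec]
  simp [dotProduct, ketPlus, ket0, ket1]

theorem W_eq_add_kron_proj (p q : ℝ) (i j : Fin 2) :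
    W p q i j = kron (kron I2 (Dk p i * Ek q j)) (proj ket0) +
      kron (kron I2 (Ek q j * Dk p i)) (proj ket1) := by
  rw [W, kron_add_right]
  -- On numerals, the reindexing in `kron_kron` is the identity by definitional unfolding.
  exact congrArg₂ (· + ·) (kron_kron _ _ _) (kron_kron _ _ _)

theorem conjTranspose_tensorKet_mul_W_mul_tensorKet_ketPlus (p q : ℝ) (i j : Fin 2) :
    (tensorKet 4 ketPlus)ᴴ * W p q i j * tensorKet 4 ketPlus =
      kron I2 (jordanProduct (Dk p i) (Ek q j)) := by
  rw [W_eq_add_kron_proj, Matrix.mul_add, Matrix.add_mul,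
    conjTranspose_tensorKet_mul_kron_mul_tensorKet,
    conjTranspose_tensorKet_mul_kron_mul_tensorKet,
    star_ketPlus_dotProduct_proj_ket0_mulVec_ketPlus,
    star_ketPlus_dotProduct_proj_ket1_mulVec_ketPlus, ← smul_add, Complex.coe_smul,
    jordanProduct, kron_smul_right, kron_add_right]

theorem contractCtrl_sum {ι : Type*} (s : Finset ι) (M : ι → Matrix (Fin 8) (Fin 8) ℂ)
    (v : Fin 2 → ℂ) : contractCtrl (∑ i ∈ s, M i) v = ∑ i ∈ s, contractCtrl (M i) v := by
  simp only [contractCtrl_eq_mul, Matrix.mul_sum, Matrix.sum_mul]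

theorem contractCtrl_Sout_ketPlus_eq_sum (p q : ℝ) (ρ : Matrix (Fin 4) (Fin 4) ℂ) :
    contractCtrl (Sout p q ρ) ketPlus =
      ∑ i, ∑ j, kron I2 (jordanProduct (Dk p i) (Ek q j)) * ρ *
        (kron I2 (jordanProduct (Dk p i) (Ek q j)))ᴴ := by
  simp only [Sout, contractCtrl_sum, contractCtrl_mul_kron_proj_mul_conjTranspose,
    conjTranspose_tensorKet_mul_W_mul_tensorKet_ketPlus]

theorem contractCtrl_Sout_ketPlus {p q : ℝ} (hp : p ∈ Set.Icc (0 : ℝ) 1)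
    (hq : q ∈ Set.Icc (0 : ℝ) 1) (ρ : Matrix (Fin 4) (Fin 4) ℂ) :
    contractCtrl (Sout p q ρ) ketPlus =
      ((1 - p) * (1 - q) : ℝ) • ρ
        + (p * (1 - q) : ℝ) • (kron I2 PX * ρ * (kron I2 PX)ᴴ)
        + ((1 - p) * q : ℝ) • (kron I2 PZ * ρ * (kron I2 PZ)ᴴ) := by
  have hp' : 0 ≤ 1 - p := sub_nonneg.mpr hp.2
  have hq' : 0 ≤ 1 - q := sub_nonneg.mpr hq.2
  have kron_I2_one : kron I2 (1 : Matrix (Fin 2) (Fin 2) ℂ) = 1 := kron_one_one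
  rw [contractCtrl_Sout_ketPlus_eq_sum]
  simp only [Fin.sum_univ_two, Dk_zero, Dk_one, Ek_zero, Ek_one]
  rw [kron_jordanProduct_sqrt_smul_conj hp' hq', kron_jordanProduct_sqrt_smul_conj hp' hq.1,
    kron_jordanProduct_sqrt_smul_conj hp.1 hq', kron_jordanProduct_sqrt_smul_conj hp.1 hq.1,
    jordanProduct_of_anticommute PX_mul_PZ]
  simp only [jordanProduct_one_left, jordanProduct_one_right, kron_zero_right, kron_I2_one,
    Matrix.one_mul, Matrix.zero_mul, Matrix.mul_one, conjTranspose_one, smul_zero, add_zero]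
  exact add_right_comm _ _ _

theorem plus_heralded_branch_general {p q : ℝ} (hp : p ∈ Set.Icc (0 : ℝ) 1)
    (hq : q ∈ Set.Icc (0 : ℝ) 1) (ρ : Matrix (Fin 4) (Fin 4) ℂ) :
    contractCtrl (Sout p q ρ) ketPlus =
      ((1 - p) * (1 - q) : ℝ) • ρ
        + (p * (1 - q) : ℝ) • (kron I2 PX * ρ * (kron I2 PX)ᴴ)
        + ((1 - p) * q : ℝ) • (kron I2 PZ * ρ * (kron I2 PZ)ᴴ)
    ∧ (contractCtrl (Sout p q ρ) ketPlus).trace = (1 - p * q : ℝ) * ρ.trace := by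
  have trace_conj {U : Matrix (Fin 2) (Fin 2) ℂ} (hU : U ∈ unitaryGroup (Fin 2) ℂ) :
      (kron I2 U * ρ * (kron I2 U)ᴴ).trace = ρ.trace :=
    trace_kron_mul_mul_conjTranspose_kron (m := 2) (n := 2) (one_mem _) hU ρ
  refine ⟨contractCtrl_Sout_ketPlus hp hq ρ, ?_⟩
  rw [contractCtrl_Sout_ketPlus hp hq, trace_add, trace_add, trace_smul, trace_smul, trace_smul,
    trace_conj PX_mem_unitaryGroup, trace_conj PZ_mem_unitaryGroup, ← add_smul, ← add_smul,
    Complex.real_smul]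
  congr 2
  ring

end Switch

theorem plus_heralded_branch (p q : ℝ) (hp : p ∈ Set.Icc (0 : ℝ) 1)
    (hq : q ∈ Set.Icc (0 : ℝ) 1) (ρ : Matrix (Fin 4) (Fin 4) ℂ)
    (hρ : ρ.trace = 1) :
    contractCtrl (Sout p q ρ) ketPlus =
      ((1 - p) * (1 - q) : ℝ) • ρ
        + (p * (1 - q) : ℝ) • (kron I2 PX * ρ * (kron I2 PX)ᴴ)
        + ((1 - p) * q : ℝ) • (kron I2 PZ * ρ * (kron I2 PZ)ᴴ)
    ∧ (contractCtrl (Sout p q ρ) ketPlus).trace = (1 - p * q : ℝ)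
    ∧ (p * q < 1 →
        ((1 - p * q : ℝ)⁻¹ : ℂ) • contractCtrl (Sout p q ρ) ketPlus =
          ((1 - p * q : ℝ)⁻¹ : ℂ) •
            (((1 - p) * (1 - q) : ℝ) • ρ
              + (p * (1 - q) : ℝ) • (kron I2 PX * ρ * (kron I2 PX)ᴴ)
              + ((1 - p) * q : ℝ) • (kron I2 PZ * ρ * (kron I2 PZ)ᴴ))) := by
  obtain ⟨branch_eq, trace_eq⟩ := plus_heralded_branch_general hp hq ρ
  exact ⟨branch_eq, by rw [trace_eq, hρ, mul_one], fun _ => by rw [branch_eq]⟩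

end
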